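/- Let Λ be a balanced and spanning cone in 𝕍. If f : 𝕍 → ℝ is Λ-convex and of linear growth, then f is Lipschitz continuous; moreover, for all z ∈ 𝕍 and w ∈ Λ one has f(z+w) ≤ f(z) + f^∞(w), where f^∞ is the upper recession function of f. -/

import Mathlib

open MeasureTheory Filter Topology

noncomputable section

/-! ## Basic PDE setup -/

abbrev Dom (n : ℕ) := Fin n → ℝ

def unitCube (n : ℕ) : Set (Dom n) := Set.univ.pi fun _ => Set.Ioo (-(1/2) : ℝ) (1/2)

def closedUnitCube (n : ℕ) : Set (Dom n) := Set.univ.pi fun _ => Set.Icc (-(1/2) : ℝ) (1/2)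

/-- The finite set of multi-indices of degree `k`. -/
def degSet (n k : ℕ) : Finset (Fin n → ℕ) :=
  (Fintype.piFinset fun _ : Fin n => Finset.range (k+1)).filter fun α => (∑ i, α i) = k

/-- Partial derivative in the `j`-th coordinate direction. -/
def pderivDir {n : ℕ} {V : Type*} [NormedAddCommGroup V] [NormedSpace ℝ V]
    (j : Fin n) (u : Dom n → V) : Dom n → V :=
  fun x => fderiv ℝ u x (Pi.single j 1)

/-- The multi-index partial derivative `∂^α`. -/
def mderiv {n : ℕ} {V : Type*} [NormedAddCommGroup V] [NormedSpace ℝ V]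
    (α : Fin n → ℕ) (u : Dom n → V) : Dom n → V :=
  (List.finRange n).foldr (fun j f => (pderivDir j)^[α j] f) u

/-- The action of a homogeneous `k`-th order constant-coefficient operator with
coefficients `A α` on a function. -/
def opApply {n : ℕ} {V W : Type*} [NormedAddCommGroup V] [NormedSpace ℝ V]
    [NormedAddCommGroup W] [NormedSpace ℝ W]
    (A : (Fin n → ℕ) → (V →L[ℝ] W)) (k : ℕ) (u : Dom n → V) (x : Dom n) : W :=
  ∑ α ∈ degSet n k, A α (mderiv α u x)

/-- The symbol `𝒜(ξ) = Σ_{|α|=k} ξ^α A_α`. -/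
def opSymbol {n : ℕ} {V W : Type*} [NormedAddCommGroup V] [NormedSpace ℝ V]
    [NormedAddCommGroup W] [NormedSpace ℝ W]
    (A : (Fin n → ℕ) → (V →L[ℝ] W)) (k : ℕ) (ξ : Dom n) : V →L[ℝ] W :=
  ∑ α ∈ degSet n k, (∏ i, ξ i ^ α i) • A α

/-- The wave cone `Λ_𝒜 = ⋃_{ξ ≠ 0} ker 𝒜(ξ)`. -/
def waveCone {n : ℕ} {V W : Type*} [NormedAddCommGroup V] [NormedSpace ℝ V]
    [NormedAddCommGroup W] [NormedSpace ℝ W]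
    (A : (Fin n → ℕ) → (V →L[ℝ] W)) (k : ℕ) : Set V :=
  {v | ∃ ξ : Dom n, ξ ≠ 0 ∧ opSymbol A k ξ v = 0}

/-- The wave cone is spanning. -/
def SpanningCone {n : ℕ} {V W : Type*} [NormedAddCommGroup V] [NormedSpace ℝ V]
    [NormedAddCommGroup W] [NormedSpace ℝ W]
    (A : (Fin n → ℕ) → (V →L[ℝ] W)) (k : ℕ) : Prop :=
  Submodule.span ℝ (waveCone A k) = ⊤

/-- `ℬ` is an exact potential of `𝒜`:  `ker 𝒜(ξ) = im ℬ(ξ)` for all `ξ ≠ 0`. -/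
def ExactPotential {n : ℕ} {U V W : Type*} [NormedAddCommGroup V] [NormedSpace ℝ V]
    [NormedAddCommGroup W] [NormedSpace ℝ W] [NormedAddCommGroup U] [NormedSpace ℝ U]
    (A : (Fin n → ℕ) → (V →L[ℝ] W)) (k : ℕ)
    (B : (Fin n → ℕ) → (U →L[ℝ] V)) (l : ℕ) : Prop :=
  ∀ ξ : Dom n, ξ ≠ 0 → LinearMap.ker (opSymbol A k ξ : V →ₗ[ℝ] W) = LinearMap.range (opSymbol B l ξ : U →ₗ[ℝ] V)

/-- `ℤⁿ`-periodicity. -/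
def ZPeriodic {n : ℕ} {V : Type*} (v : Dom n → V) : Prop :=
  ∀ (x : Dom n) (m : Fin n → ℤ), v (x + fun i => (m i : ℝ)) = v x

/-- `𝒜`-quasiconvexity of a continuous integrand. -/
def AQuasiconvex {n : ℕ} {V W : Type*} [NormedAddCommGroup V] [NormedSpace ℝ V]
    [NormedAddCommGroup W] [NormedSpace ℝ W]
    (A : (Fin n → ℕ) → (V →L[ℝ] W)) (k : ℕ) (f : V → ℝ) : Prop :=
  Continuous f ∧ ∀ (z : V) (v : Dom n → V), ContDiff ℝ (⊤ : ℕ∞) v → ZPeriodic v →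
    (∫ x in unitCube n, v x) = 0 → (∀ x, opApply A k v x = 0) →
    f z ≤ ∫ x in unitCube n, f (z + v x)

def LinearGrowth {V : Type*} [NormedAddCommGroup V] (f : V → ℝ) : Prop :=
  ∃ c : ℝ, ∀ z, |f z| ≤ c * (1 + ‖z‖)

/-- Upper recession function `f^∞(z) = limsup_{t→∞, z'→z} f(tz')/t`. -/
def urec {V : Type*} [NormedAddCommGroup V] [NormedSpace ℝ V] (f : V → ℝ) (z : V) : ℝ :=
  limsup (fun p : ℝ × V => f (p.1 • p.2) / p.1) (atTop ×ˢ 𝓝 z)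

/-- The radial recession function `z ↦ limsup_{t→∞} f(tz)/t`. -/
def rrec {V : Type*} [NormedAddCommGroup V] [NormedSpace ℝ V] (f : V → ℝ) (z : V) : ℝ :=
  limsup (fun t : ℝ => f (t • z) / t) atTop

/-- `g` is the recession function of `Φ`, the limit being locally uniform. -/
def HasRec {V : Type*} [NormedAddCommGroup V] [NormedSpace ℝ V] (Φ g : V → ℝ) : Prop :=
  TendstoLocallyUniformly (fun (t : ℝ) (z : V) => Φ (t • z) / t) g atTop

/-- Membership in the class `ℍ`. -/
def MemH {V : Type*} [NormedAddCommGroup V] [NormedSpace ℝ V] (Φ : V → ℝ) : Prop :=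
  Continuous Φ ∧ LinearGrowth Φ ∧ ∃ g : V → ℝ, HasRec Φ g

/-- `C_c^∞` functions with support in `Ω`. -/
def CcSmooth {n : ℕ} {U : Type*} [NormedAddCommGroup U] [NormedSpace ℝ U]
    (Ω : Set (Dom n)) (u : Dom n → U) : Prop :=
  ContDiff ℝ (⊤ : ℕ∞) u ∧ HasCompactSupport u ∧ tsupport u ⊆ Ω

/-- The `W^{l-1,1}` norm : sum of the `L¹` norms of derivatives of order `< l`. -/
def sobNorm {n : ℕ} {U : Type*} [NormedAddCommGroup U] [NormedSpace ℝ U]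
    (l : ℕ) (u : Dom n → U) : ℝ :=
  ∑ j ∈ Finset.range l, ∫ x : Dom n, ‖iteratedFDeriv ℝ j u x‖

/-- Membership of a pair `(ν⁰, ν^∞)` in the set `Y(z)` of Young measures generated by
sequences `z + ℬ u_j` with `u_j ∈ C_c^∞(𝕏, 𝕌)` and `‖u_j‖_{W^{l-1,1}} → 0`. -/
def memY {n : ℕ} {U V : Type*} [NormedAddCommGroup V] [InnerProductSpace ℝ V]
    [FiniteDimensional ℝ V] [MeasurableSpace V] [BorelSpace V]
    [NormedAddCommGroup U] [NormedSpace ℝ U]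
    (B : (Fin n → ℕ) → (U →L[ℝ] V)) (l : ℕ) (z : V)
    (nu0 : Measure V) (nuInf : Measure (Metric.sphere (0:V) 1)) : Prop :=
  ∃ u : ℕ → Dom n → U,
    (∀ j, CcSmooth (unitCube n) (u j)) ∧
    Tendsto (fun j => sobNorm l (u j)) atTop (𝓝 0) ∧
    ∀ Φ : V → ℝ, MemH Φ →
      Tendsto (fun j => ∫ x in unitCube n, Φ (z + opApply B l (u j) x)) atTop
        (𝓝 ((∫ v, Φ v ∂nu0) + ∫ w, rrec Φ (w : V) ∂nuInf))

/-! ## Statement 10: Λ-convex functions of linear growth -/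

/-!
Along a direction of convexity `w` the difference quotients `(f (z + t • w) - f z) / t` increase
in `t`. Since `z + t • w = t • (w + t⁻¹ • z)` and `w + t⁻¹ • z → w`, letting `t → ∞` bounds the
increment `f (z + w) - f z` by the upper recession function at `w`. Linear growth bounds the latter
by `c * ‖w‖`, uniformly in `z`; moving along the vectors of a basis of convexity directions, one
coordinate at a time, then gives the Lipschitz estimate.
-/

section Increments

theorem apply_add_sum_le {M ι : Type*} [AddCommMonoid M] {f : M → ℝ} {v : ι → M} {C : ι → ℝ}
    (s : Finset ι) (h : ∀ i ∈ s, ∀ z, f (z + v i) ≤ f z + C i) (z : M) :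
    f (z + ∑ i ∈ s, v i) ≤ f z + ∑ i ∈ s, C i := by
  classical
  induction s using Finset.induction_on with
  | empty => simp
  | insert i s hi ih =>
    rw [Finset.sum_insert hi, Finset.sum_insert hi]
    calc f (z + (v i + ∑ j ∈ s, v j)) = f (z + ∑ j ∈ s, v j + v i) := by
          rw [add_comm (v i), add_assoc]
      _ ≤ f (z + ∑ j ∈ s, v j) + C i := h i (Finset.mem_insert_self i s) _
      _ ≤ f z + ∑ j ∈ s, C j + C i := by
          gcongr
          exact ih fun j hj ↦ h j (Finset.mem_insert_of_mem hj)
      _ = f z + (C i + ∑ j ∈ s, C j) := by ring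

theorem exists_lipschitzWith_of_basis {V ι : Type*} [NormedAddCommGroup V] [NormedSpace ℝ V]
    [Finite ι] (b : Module.Basis ι ℝ V) {f : V → ℝ} {c : NNReal}
    (h : ∀ i z, ∀ r : ℝ, f (z + r • b i) ≤ f z + c * ‖r • b i‖) :
    ∃ K : NNReal, LipschitzWith K f := by
  have := Fintype.ofFinite ι
  have := Module.Finite.of_basis b
  let P (i : ι) : V →L[ℝ] V := ((b.coord i).smulRight (b i)).toContinuousLinearMap
  refine ⟨∑ i, c * ‖P i‖₊, LipschitzWith.of_le_add_mul _ fun x y ↦ ?_⟩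
  have sum_P : ∑ i, P i (x - y) = x - y := b.sum_repr (x - y)
  calc f x = f (y + ∑ i, P i (x - y)) := by rw [sum_P, add_sub_cancel]
    _ ≤ f y + ∑ i, c * ‖P i (x - y)‖ := apply_add_sum_le _ (fun i _ z ↦ h i z _) y
    _ ≤ f y + ∑ i, c * (‖P i‖ * ‖x - y‖) := by
        gcongr with i
        exact (P i).le_opNorm _
    _ = f y + ↑(∑ i, c * ‖P i‖₊) * dist x y := by
        simp only [NNReal.coe_sum, NNReal.coe_mul, coe_nnnorm, Finset.sum_mul, mul_assoc,
          dist_eq_norm]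

end Increments

section Recession

variable {V : Type*} [NormedAddCommGroup V] {f : V → ℝ}

theorem LinearGrowth.exists_nnreal (hf : LinearGrowth f) :
    ∃ c : NNReal, ∀ z, |f z| ≤ c * (1 + ‖z‖) := by
  obtain ⟨c, hc⟩ := hf
  refine ⟨c.toNNReal, fun z ↦ (hc z).trans ?_⟩
  gcongr
  exact c.le_coe_toNNReal

theorem tendsto_mul_inv_add_norm (c : ℝ) (w : V) :
    Tendsto (fun p : ℝ × V ↦ c * (p.1⁻¹ + ‖p.2‖)) (atTop ×ˢ 𝓝 w) (𝓝 (c * ‖w‖)) := by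
  simpa only [zero_add, Function.comp_apply] using
    ((tendsto_inv_atTop_zero.comp tendsto_fst).add tendsto_snd.norm).const_mul c

variable [NormedSpace ℝ V] {c : ℝ}

theorem abs_apply_smul_div_le (hc : ∀ z, |f z| ≤ c * (1 + ‖z‖)) {t : ℝ} (ht : 0 < t) (v : V) :
    |f (t • v) / t| ≤ c * (t⁻¹ + ‖v‖) := by
  rw [abs_div, abs_of_pos ht, div_le_iff₀ ht]
  calc |f (t • v)| ≤ c * (1 + ‖t • v‖) := hc _
    _ = c * (t⁻¹ + ‖v‖) * t := by
        rw [norm_smul, Real.norm_of_nonneg ht.le]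
        field_simp

theorem eventually_abs_apply_smul_div_le (hc : ∀ z, |f z| ≤ c * (1 + ‖z‖)) (w : V) :
    ∀ᶠ p : ℝ × V in atTop ×ˢ 𝓝 w, |f (p.1 • p.2) / p.1| ≤ c * (p.1⁻¹ + ‖p.2‖) :=
  (tendsto_fst.eventually (eventually_gt_atTop 0)).mono fun p hp ↦
    abs_apply_smul_div_le hc hp p.2

theorem LinearGrowth.isBoundedUnder_abs_apply_smul_div (hf : LinearGrowth f) (w : V) :
    IsBoundedUnder (· ≤ ·) (atTop ×ˢ 𝓝 w) fun p : ℝ × V ↦ |f (p.1 • p.2) / p.1| := by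
  obtain ⟨c, hc⟩ := hf
  exact (tendsto_mul_inv_add_norm c w).isBoundedUnder_le.mono_le
    (eventually_abs_apply_smul_div_le hc w)

theorem urec_le_mul_norm (hc : ∀ z, |f z| ≤ c * (1 + ‖z‖)) (w : V) : urec f w ≤ c * ‖w‖ := by
  have bounded := isBoundedUnder_le_abs.1 <|
    LinearGrowth.isBoundedUnder_abs_apply_smul_div ⟨c, hc⟩ w
  have majorant_tendsto := tendsto_mul_inv_add_norm c w
  calc urec f w ≤ limsup (fun p : ℝ × V ↦ c * (p.1⁻¹ + ‖p.2‖)) (atTop ×ˢ 𝓝 w) :=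
        limsup_le_limsup
          ((eventually_abs_apply_smul_div_le hc w).mono fun _ hp ↦ (le_abs_self _).trans hp)
          bounded.2.isCoboundedUnder_le majorant_tendsto.isBoundedUnder_le
    _ = c * ‖w‖ := majorant_tendsto.limsup_eq

theorem tendsto_prodMk_add_inv_smul (z w : V) :
    Tendsto (fun t : ℝ ↦ (t, w + t⁻¹ • z)) atTop (atTop ×ˢ 𝓝 w) := by
  have tendsto_inv_smul : Tendsto (fun t : ℝ ↦ t⁻¹ • z) atTop (𝓝 0) := by
    simpa only [zero_smul] using
      (tendsto_inv_atTop_zero (𝕜 := ℝ)).smul_const z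
  exact tendsto_id.prodMk (by simpa only [add_zero] using tendsto_inv_smul.const_add w)

end Recession

/-- Convexity of `f` on every line with direction `w`. A function is `Λ`-convex when this holds for
all `w ∈ Λ`. -/
def ConvexAlong {V : Type*} [AddCommGroup V] [Module ℝ V] (f : V → ℝ) (w : V) : Prop :=
  ∀ z, ConvexOn ℝ Set.univ fun t : ℝ ↦ f (z + t • w)

namespace ConvexAlong

section Module

variable {V : Type*} [AddCommGroup V] [Module ℝ V] {f : V → ℝ} {w : V}

theorem const_smul (hf : ConvexAlong f w) (r : ℝ) : ConvexAlong f (r • w) := fun z ↦ by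
  simpa only [Function.comp_def, LinearMap.mulRight_apply, Set.preimage_univ, smul_smul] using
    (hf z).comp_linearMap (LinearMap.mulRight ℝ r)

theorem sub_le_div (hf : ConvexAlong f w) (z : V) {t : ℝ} (ht : 1 ≤ t) :
    f (z + w) - f z ≤ (f (z + t • w) - f z) / t := by
  simpa only [one_smul, zero_smul, add_zero, sub_zero, div_one] using
    (hf z).secant_mono (Set.mem_univ 0) (Set.mem_univ 1) (Set.mem_univ t) one_ne_zero
      (by positivity) ht

end Module

variable {V : Type*} [NormedAddCommGroup V] [NormedSpace ℝ V] {f : V → ℝ} {w : V}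

theorem apply_add_le_add_urec (hf : ConvexAlong f w) (hgrow : LinearGrowth f) (z : V) :
    f (z + w) ≤ f z + urec f w := by
  rw [← sub_le_iff_le_add']
  refine le_of_forall_lt_imp_le_of_dense fun a ha ↦ ?_
  have tendsto_lower :
      Tendsto (fun t : ℝ ↦ f (z + w) - f z + f z / t) atTop (𝓝 (f (z + w) - f z)) := by
    simpa only [add_zero, id] using
      ((tendsto_const_nhds (x := f z)).div_atTop tendsto_id).const_add (f (z + w) - f z)
  have le_quotient : ∀ᶠ t : ℝ in atTop, a ≤ f (t • (w + t⁻¹ • z)) / t := by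
    filter_upwards [eventually_ge_atTop 1, tendsto_lower.eventually_const_lt ha] with t ht hat
    have smul_eq : t • (w + t⁻¹ • z) = z + t • w := by
      rw [smul_add, smul_inv_smul₀ (by positivity), add_comm]
    have secant := hf.sub_le_div z ht
    rw [sub_div] at secant
    rw [smul_eq]
    linarith
  exact le_limsup_of_frequently_le
    ((tendsto_prodMk_add_inv_smul z w).frequently le_quotient.frequently)
    (isBoundedUnder_le_abs.1 (hgrow.isBoundedUnder_abs_apply_smul_div w)).1

theorem apply_add_le_add_mul_norm (hf : ConvexAlong f w) {c : ℝ}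
    (hc : ∀ z, |f z| ≤ c * (1 + ‖z‖)) (z : V) : f (z + w) ≤ f z + c * ‖w‖ :=
  (hf.apply_add_le_add_urec ⟨c, hc⟩ z).trans (by gcongr; exact urec_le_mul_norm hc w)

end ConvexAlong

theorem exists_lipschitzWith_of_convexAlong {V : Type*} [NormedAddCommGroup V] [NormedSpace ℝ V]
    [FiniteDimensional ℝ V] {Λ : Set V} (hspan : Submodule.span ℝ Λ = ⊤) {f : V → ℝ}
    (hconv : ∀ w ∈ Λ, ConvexAlong f w) (hgrow : LinearGrowth f) :
    ∃ K : NNReal, LipschitzWith K f := by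
  obtain ⟨c, hc⟩ := hgrow.exists_nnreal
  let b := Module.Basis.ofSpan hspan.ge
  have := Module.Finite.finite_basis b
  have b_mem (i) : b i ∈ Λ := Module.Basis.ofSpan_subset hspan.ge (Set.mem_range_self i)
  exact exists_lipschitzWith_of_basis b fun i z r ↦
    ((hconv _ (b_mem i)).const_smul r).apply_add_le_add_mul_norm hc z

theorem stmt10_general {V : Type*} [NormedAddCommGroup V] [NormedSpace ℝ V]
    [FiniteDimensional ℝ V] {Λ : Set V} (hspan : Submodule.span ℝ Λ = ⊤) {f : V → ℝ}
    (hconv : ∀ w ∈ Λ, ConvexAlong f w) (hgrow : LinearGrowth f) :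
    (∃ K : NNReal, LipschitzWith K f) ∧
      ∀ z : V, ∀ w ∈ Λ, f (z + w) ≤ f z + urec f w :=
  ⟨exists_lipschitzWith_of_convexAlong hspan hconv hgrow,
    fun z w hw ↦ (hconv w hw).apply_add_le_add_urec hgrow z⟩

theorem stmt10 {V : Type*} [NormedAddCommGroup V] [InnerProductSpace ℝ V]
    [FiniteDimensional ℝ V] (Λ : Set V)
    (hcone : ∀ w ∈ Λ, ∀ c : ℝ, 0 ≤ c → c • w ∈ Λ)
    (hbal : ∀ w ∈ Λ, -w ∈ Λ) (hspan : Submodule.span ℝ Λ = ⊤)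
    (f : V → ℝ)
    (hconv : ∀ z : V, ∀ w ∈ Λ, ConvexOn ℝ Set.univ fun t : ℝ => f (z + t • w))
    (hgrow : LinearGrowth f) :
    (∃ K : NNReal, LipschitzWith K f) ∧
      ∀ z : V, ∀ w ∈ Λ, f (z + w) ≤ f z + urec f w :=
  stmt10_general hspan (fun w hw z ↦ hconv z w hw) hgrow

end
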